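/- arXiv:2305.15173 — 4 statements merged into one kernel-verified Lean document; each statement's English description precedes it below -/
import Mathlib

section
/- (Transformation Theorem) Let α ≥ 1 and let Π = (MIN, MAX) be an objective decomposition. Suppose S is a scalarization for Π such that in every instance of every p-objective optimization problem of type Π, every optimal solution set for S is an α-approximation set. Then for every objective decomposition Π' there exists a scalarization S' for Π' such that in every instance of every p-objective optimization problem of type Π', every optimal solution set for S' is an α-approximation set. -/
/-!
Invert exactly the coordinates whose type differs between `Π` and `Π'`. This self-map of the
positive orthant carries `<_Π'` to `<_Π` and, since inversion turns a factor `α` into `1 / α`,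
matches `α`-approximation for `Π'` with `α`-approximation for `Π`. Precomposing every scalarizing
function of `S` with it therefore yields a scalarization with the desired property.
-/

open scoped Classical

namespace MOApprox

/-- Membership in the positive orthant `ℝ^p_>`. -/
def Pos (p : ℕ) (y : Fin p → ℝ) : Prop := ∀ i, 0 < y i

/-- Strict component-wise order `<_Π`, where `Π = (MIN, MINᶜ)`. -/
def ltPi (p : ℕ) (MIN : Set (Fin p)) (y y' : Fin p → ℝ) : Prop :=
  (∀ i ∈ MIN, y i < y' i) ∧ (∀ i ∉ MIN, y' i < y i)

/-- Weak component-wise order `≦_Π`. -/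
def leqPi (p : ℕ) (MIN : Set (Fin p)) (y y' : Fin p → ℝ) : Prop :=
  (∀ i ∈ MIN, y i ≤ y' i) ∧ (∀ i ∉ MIN, y' i ≤ y i)

/-- Component-wise order `≤_Π`. -/
def lePi (p : ℕ) (MIN : Set (Fin p)) (y y' : Fin p → ℝ) : Prop :=
  leqPi p MIN y y' ∧ y ≠ y'

/-- A scalarizing function for the decomposition `(MIN, MINᶜ)`:
continuous on the positive orthant and strictly `Π`-monotone. -/
def Scalarizing (p : ℕ) (MIN : Set (Fin p)) (s : (Fin p → ℝ) → ℝ) : Prop :=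
  ContinuousOn s {y | Pos p y} ∧
    ∀ y y', Pos p y → Pos p y' → ltPi p MIN y y' → s y < s y'

/-- Strong `Π`-monotonicity. -/
def StronglyMonotone (p : ℕ) (MIN : Set (Fin p)) (s : (Fin p → ℝ) → ℝ) : Prop :=
  ∀ y y', Pos p y → Pos p y' → lePi p MIN y y' → s y < s y'

/-- Level set of `s` at `y'` (within the positive orthant). -/
def LevelSet (p : ℕ) (s : (Fin p → ℝ) → ℝ) (y' : Fin p → ℝ) : Set (Fin p → ℝ) :=
  {y | Pos p y ∧ s y = s y'}

/-- `x` is optimal for the scalarizing function `s` in the instance `(X, f)`. -/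
def OptimalFor {X : Type*} (p : ℕ) (s : (Fin p → ℝ) → ℝ) (f : X → Fin p → ℝ) (x : X) : Prop :=
  ∀ x', s (f x) ≤ s (f x')

/-- `P` is an optimal solution set for the scalarization `S`. -/
def OptSolSet {X : Type*} (p : ℕ) (S : Set ((Fin p → ℝ) → ℝ)) (f : X → Fin p → ℝ)
    (P : Set X) : Prop :=
  ∀ s ∈ S, ∃ x ∈ P, OptimalFor p s f x

/-- `x` α-approximates `x'` with respect to the decomposition `(MIN, MINᶜ)`. -/
def Approximates {X : Type*} (p : ℕ) (MIN : Set (Fin p)) (α : ℝ) (f : X → Fin p → ℝ)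
    (x x' : X) : Prop :=
  (∀ i ∈ MIN, f x i ≤ α * f x' i) ∧ (∀ i ∉ MIN, (1 / α) * f x' i ≤ f x i)

/-- `P` is an α-approximation set. -/
def ApproxSet {X : Type*} (p : ℕ) (MIN : Set (Fin p)) (α : ℝ) (f : X → Fin p → ℝ)
    (P : Set X) : Prop :=
  ∀ x' : X, ∃ x ∈ P, Approximates p MIN α f x x'

/-- The flip map `σ^Γ`. -/
noncomputable def flipMap (p : ℕ) (Γ : Set (Fin p)) (y : Fin p → ℝ) : Fin p → ℝ :=
  fun i => if i ∈ Γ then 1 / y i else y i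

/-- The `Γ`-transformed decomposition `MIN^Γ = (MIN \ Γ) ∪ (Γ ∩ MAX)`. -/
def transDec (p : ℕ) (MIN Γ : Set (Fin p)) : Set (Fin p) :=
  (MIN \ Γ) ∪ (Γ ∩ MINᶜ)

/-- The component-wise worst-case ratio
`max(max_{i ∈ MIN} y_i/y'_i, max_{i ∈ MAX} y'_i/y_i)`, where a maximum
over an empty index set is `0` (the convention of `Real.sSup` on `∅`). -/
noncomputable def ratio (p : ℕ) (MIN : Set (Fin p)) (y' y : Fin p → ℝ) : ℝ :=
  max (⨆ i : MIN, y i / y' i) (⨆ i : ↥(MINᶜ), y' i / y i)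

/-- `sup R(y', s)`, taken in the extended reals. -/
noncomputable def supRatio (p : ℕ) (MIN : Set (Fin p)) (s : (Fin p → ℝ) → ℝ)
    (y' : Fin p → ℝ) : EReal :=
  sSup ((fun y => ((ratio p MIN y' y : ℝ) : EReal)) '' LevelSet p s y')

/-- The function value of a `p`-dimensional norm, as a predicate. -/
def IsNorm (p : ℕ) (s : (Fin p → ℝ) → ℝ) : Prop :=
  (∀ y, 0 ≤ s y) ∧ (∀ y, s y = 0 ↔ y = 0) ∧
    (∀ (c : ℝ) (y), s (c • y) = |c| * s y) ∧
    (∀ y z, s (y + z) ≤ s y + s z)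

/-- Strict monotonicity on the positive orthant. -/
def StrictMonoOnPos (p : ℕ) (s : (Fin p → ℝ) → ℝ) : Prop :=
  ∀ y y' : Fin p → ℝ, Pos p y → Pos p y' → (∀ i, y i < y' i) → s y < s y'

end MOApprox

namespace MOApprox

universe u

/-- The scalarization `S` guarantees `α`-approximation for the decomposition `(MIN, MINᶜ)`: in every
instance, every optimal solution set for `S` is an `α`-approximation set. An instance `(X, f)` is
encoded by a nonempty type `X` and a map `f` into the positive orthant with compact range. -/
def GuaranteesApprox (p : ℕ) (MIN : Set (Fin p)) (α : ℝ) (S : Set ((Fin p → ℝ) → ℝ)) : Prop :=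
  ∀ (X : Type u) (f : X → Fin p → ℝ), Nonempty X → (∀ x, Pos p (f x)) →
    IsCompact (Set.range f) → ∀ P : Set X, OptSolSet p S f P → ApproxSet p MIN α f P

variable {p : ℕ} {MIN Γ : Set (Fin p)} {i : Fin p} {y y' : Fin p → ℝ}

theorem transDec_eq_symmDiff (MIN Γ : Set (Fin p)) : transDec p MIN Γ = symmDiff MIN Γ := by
  rw [transDec, Set.symmDiff_def, Set.sdiff_eq Γ]

theorem transDec_symmDiff_cancel (MIN MIN' : Set (Fin p)) :
    transDec p MIN (symmDiff MIN MIN') = MIN' := by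
  rw [transDec_eq_symmDiff, symmDiff_symmDiff_cancel_left]

theorem mem_transDec_of_mem (hi : i ∈ Γ) : i ∈ transDec p MIN Γ ↔ i ∉ MIN := by
  simp [transDec, hi]

theorem mem_transDec_of_notMem (hi : i ∉ Γ) : i ∈ transDec p MIN Γ ↔ i ∈ MIN := by
  simp [transDec, hi]

theorem flipMap_apply_of_mem (hi : i ∈ Γ) (y : Fin p → ℝ) : flipMap p Γ y i = 1 / y i :=
  if_pos hi

theorem flipMap_apply_of_notMem (hi : i ∉ Γ) (y : Fin p → ℝ) : flipMap p Γ y i = y i :=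
  if_neg hi

theorem Pos.flipMap (hy : Pos p y) (Γ : Set (Fin p)) : Pos p (flipMap p Γ y) := by
  intro i
  by_cases hi : i ∈ Γ
  · rw [flipMap_apply_of_mem hi]
    exact one_div_pos.mpr (hy i)
  · rw [flipMap_apply_of_notMem hi]
    exact hy i

theorem continuousOn_flipMap (Γ : Set (Fin p)) : ContinuousOn (flipMap p Γ) {y | Pos p y} := by
  refine continuousOn_pi.mpr fun i => ?_
  by_cases hi : i ∈ Γ
  · simp only [flipMap_apply_of_mem hi]
    exact continuousOn_const.div (continuous_apply i).continuousOn fun y hy => (hy i).ne'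
  · simp only [flipMap_apply_of_notMem hi]
    exact (continuous_apply i).continuousOn

theorem isCompact_range_flipMap_comp {X : Type*} {f : X → Fin p → ℝ} (hf : ∀ x, Pos p (f x))
    (hcompact : IsCompact (Set.range f)) (Γ : Set (Fin p)) :
    IsCompact (Set.range (flipMap p Γ ∘ f)) := by
  rw [Set.range_comp]
  exact hcompact.image_of_continuousOn ((continuousOn_flipMap Γ).mono (Set.range_subset_iff.mpr hf))

theorem ltPi_flipMap_iff (hy : Pos p y) (hy' : Pos p y') :
    ltPi p MIN (flipMap p Γ y) (flipMap p Γ y') ↔ ltPi p (transDec p MIN Γ) y y' := by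
  unfold ltPi
  rw [← forall_and, ← forall_and]
  refine forall_congr' fun i => ?_
  by_cases hi : i ∈ Γ
  · rw [mem_transDec_of_mem hi, flipMap_apply_of_mem hi, flipMap_apply_of_mem hi,
      one_div_lt_one_div (hy i) (hy' i), one_div_lt_one_div (hy' i) (hy i), not_not, and_comm]
  · rw [mem_transDec_of_notMem hi, flipMap_apply_of_notMem hi, flipMap_apply_of_notMem hi]

theorem Scalarizing.comp_flipMap {s : (Fin p → ℝ) → ℝ} (hs : Scalarizing p MIN s)
    (Γ : Set (Fin p)) : Scalarizing p (transDec p MIN Γ) (s ∘ flipMap p Γ) := by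
  obtain ⟨hcont, hmono⟩ := hs
  refine ⟨hcont.comp (continuousOn_flipMap Γ) fun y hy => Pos.flipMap hy Γ, ?_⟩
  intro y y' hy hy' hlt
  exact hmono _ _ (hy.flipMap Γ) (hy'.flipMap Γ) ((ltPi_flipMap_iff hy hy').mpr hlt)

theorem approximates_flipMap_comp_iff {X : Type*} {f : X → Fin p → ℝ} {α : ℝ} {x x' : X}
    (hα : 0 < α) (hx : Pos p (f x)) (hx' : Pos p (f x')) :
    Approximates p MIN α (flipMap p Γ ∘ f) x x' ↔
      Approximates p (transDec p MIN Γ) α f x x' := by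
  unfold Approximates
  rw [← forall_and, ← forall_and]
  refine forall_congr' fun i => ?_
  simp only [Function.comp_apply]
  by_cases hi : i ∈ Γ
  · have upper_iff : 1 / f x i ≤ α * (1 / f x' i) ↔ 1 / α * f x' i ≤ f x i := by
      rw [mul_one_div, div_le_div_iff₀ (hx i) (hx' i), one_mul, one_div_mul_eq_div,
        div_le_iff₀' hα]
    have lower_iff : 1 / α * (1 / f x' i) ≤ 1 / f x i ↔ f x i ≤ α * f x' i := by
      rw [one_div_mul_one_div, one_div_le_one_div (mul_pos hα (hx' i)) (hx i)]
    rw [mem_transDec_of_mem hi, flipMap_apply_of_mem hi, flipMap_apply_of_mem hi,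
      upper_iff, lower_iff, not_not, and_comm]
  · rw [mem_transDec_of_notMem hi, flipMap_apply_of_notMem hi, flipMap_apply_of_notMem hi]

theorem optSolSet_image_comp_iff {X : Type*} {f : X → Fin p → ℝ}
    {S : Set ((Fin p → ℝ) → ℝ)} {P : Set X} (g : (Fin p → ℝ) → Fin p → ℝ) :
    OptSolSet p ((· ∘ g) '' S) f P ↔ OptSolSet p S (g ∘ f) P :=
  Set.forall_mem_image

theorem GuaranteesApprox.image_comp_flipMap {α : ℝ} {S : Set ((Fin p → ℝ) → ℝ)}
    (hS : GuaranteesApprox.{u} p MIN α S) (hα : 0 < α) (Γ : Set (Fin p)) :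
    GuaranteesApprox.{u} p (transDec p MIN Γ) α ((· ∘ flipMap p Γ) '' S) := by
  intro X f hX hf hcompact P hP x'
  have happrox : ApproxSet p MIN α (flipMap p Γ ∘ f) P :=
    hS X _ hX (fun x => (hf x).flipMap Γ) (isCompact_range_flipMap_comp hf hcompact Γ) P
      ((optSolSet_image_comp_iff _).mp hP)
  obtain ⟨x, hxP, hx⟩ := happrox x'
  exact ⟨x, hxP, (approximates_flipMap_comp_iff hα (hf x) (hf x')).mp hx⟩

end MOApprox

open MOApprox in
/-- Transformation Theorem: If `S` is a scalarization for `Π`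
such that in every instance of every `p`-objective optimization problem of
type `Π`, every optimal solution set for `S` is an `α`-approximation set, then
for every other objective decomposition `Π'` there is a scalarization `S'` for
`Π'` with the same property. -/
theorem statement7 (p : ℕ) (hp : 1 ≤ p) (α : ℝ) (hα : 1 ≤ α) (MIN : Set (Fin p))
    (S : Set ((Fin p → ℝ) → ℝ)) (hS : ∀ s ∈ S, Scalarizing p MIN s)
    (h : ∀ (X : Type) (f : X → Fin p → ℝ), Nonempty X → (∀ x, Pos p (f x)) →
      IsCompact (Set.range f) →
      ∀ P : Set X, OptSolSet p S f P → ApproxSet p MIN α f P)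
    (MIN' : Set (Fin p)) :
    ∃ S' : Set ((Fin p → ℝ) → ℝ), (∀ s ∈ S', Scalarizing p MIN' s) ∧
      ∀ (X : Type) (f : X → Fin p → ℝ), Nonempty X → (∀ x, Pos p (f x)) →
        IsCompact (Set.range f) →
        ∀ P : Set X, OptSolSet p S' f P → ApproxSet p MIN' α f P := by
  obtain ⟨Γ, rfl⟩ : ∃ Γ, transDec p MIN Γ = MIN' := ⟨_, transDec_symmDiff_cancel MIN MIN'⟩
  refine ⟨(· ∘ flipMap p Γ) '' S, ?_, ?_⟩
  · exact Set.forall_mem_image.mpr fun s hs => (hS s hs).comp_flipMap Γ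
  · exact GuaranteesApprox.image_comp_flipMap h (zero_lt_one.trans_le hα) Γ
end

section
/- Let Π = (MIN, MAX) be an objective decomposition, let I = (X, f) be an instance of a p-objective optimization problem of type Π, let x' ∈ X with y' := f(x'), and let s be a scalarizing function for Π. Suppose the ratio set R := {max(max_{i ∈ MIN} y_i/y'_i, max_{i ∈ MAX} y'_i/y_i) : y ∈ L(y', s)} is bounded above, and let α := sup R (a real number, since y' ∈ L(y', s) makes R nonempty). Then every solution x ∈ X that is optimal for s α-approximates x'. -/
/-!
Among the positive points that are weakly worse than `f x`, which form a convex set, `s` takes the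
value `s (f x) ≤ s (f x')` at `f x` and, by strict monotonicity, a value above `s (f x')` at a point
that is strictly worse than both `f x` and `f x'`. By the intermediate value theorem, some point `z`
weakly worse than `f x` lies on the level set of `f x'`; since the component ratios of `z` are at
most `α`, those of `f x` are as well.
-/

open scoped Classical

namespace MOApprox

variable {p : ℕ} {MIN : Set (Fin p)} {y y' z : Fin p → ℝ}

theorem ltPi.leqPi (h : ltPi p MIN y y') : leqPi p MIN y y' :=
  ⟨fun i hi => (h.1 i hi).le, fun i hi => (h.2 i hi).le⟩

theorem leqPi_refl (y : Fin p → ℝ) : leqPi p MIN y y :=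
  ⟨fun _ _ => le_rfl, fun _ _ => le_rfl⟩

theorem convex_setOf_pos : Convex ℝ {z | Pos p z} :=
  fun _ hy _ hz _ _ ha hb hab i => convex_Ioi (0 : ℝ) (hy i) (hz i) ha hb hab

theorem convex_setOf_leqPi (MIN : Set (Fin p)) (y : Fin p → ℝ) :
    Convex ℝ {z | leqPi p MIN y z} :=
  (convex_pi fun i _ => convex_Ici (y i)).inter
    (convex_pi (s := MINᶜ) fun i _ => convex_Iic (y i))

theorem exists_pos_ltPi_ltPi (MIN : Set (Fin p)) (hy : Pos p y) (hy' : Pos p y') :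
    ∃ w, Pos p w ∧ ltPi p MIN y w ∧ ltPi p MIN y' w := by
  have coordinate (i : Fin p) : ∃ c, 0 < c ∧ (i ∈ MIN → y i < c ∧ y' i < c) ∧
      (i ∉ MIN → c < y i ∧ c < y' i) := by
    by_cases hi : i ∈ MIN
    · exact ⟨y i + y' i, add_pos (hy i) (hy' i),
        fun _ => ⟨lt_add_of_pos_right _ (hy' i), lt_add_of_pos_left _ (hy i)⟩, (absurd hi ·)⟩
    · obtain ⟨c, hc_pos, hc_lt⟩ := exists_between (lt_min (hy i) (hy' i))
      exact ⟨c, hc_pos, (absurd · hi), fun _ => lt_min_iff.mp hc_lt⟩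
  choose w hw_pos hw_min hw_max using coordinate
  exact ⟨w, hw_pos, ⟨fun i hi => (hw_min i hi).1, fun i hi => (hw_max i hi).1⟩,
    ⟨fun i hi => (hw_min i hi).2, fun i hi => (hw_max i hi).2⟩⟩

theorem Scalarizing.exists_mem_levelSet_leqPi {s : (Fin p → ℝ) → ℝ} (hs : Scalarizing p MIN s)
    (hy : Pos p y) (hy' : Pos p y') (hle : s y ≤ s y') :
    ∃ z ∈ LevelSet p s y', leqPi p MIN y z := by
  obtain ⟨s_cont, s_mono⟩ := hs
  obtain ⟨w, hw, hyw, hy'w⟩ := exists_pos_ltPi_ltPi MIN hy hy'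
  have worse_preconnected : IsPreconnected ({z | Pos p z} ∩ {z | leqPi p MIN y z}) :=
    (convex_setOf_pos.inter (convex_setOf_leqPi MIN y)).isPreconnected
  obtain ⟨z, ⟨hz, hyz⟩, hsz⟩ := worse_preconnected.intermediate_value
    ⟨hy, leqPi_refl y⟩ ⟨hw, hyw.leqPi⟩ (s_cont.mono Set.inter_subset_left)
    ⟨hle, (s_mono y' w hy' hw hy'w).le⟩
  exact ⟨z, ⟨hz, hsz⟩, hyz⟩

theorem div_le_ratio_of_mem (y' y : Fin p → ℝ) {i : Fin p} (hi : i ∈ MIN) :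
    y i / y' i ≤ ratio p MIN y' y :=
  (le_ciSup (f := fun j : MIN => y j / y' j) (Set.finite_range _).bddAbove ⟨i, hi⟩).trans
    (le_max_left _ _)

theorem div_le_ratio_of_notMem (y' y : Fin p → ℝ) {i : Fin p} (hi : i ∉ MIN) :
    y' i / y i ≤ ratio p MIN y' y :=
  (le_ciSup (f := fun j : ↥(MINᶜ) => y' j / y j) (Set.finite_range _).bddAbove ⟨i, hi⟩).trans
    (le_max_right _ _)

theorem approximates_of_leqPi_of_ratio_le {X : Type*} {f : X → Fin p → ℝ} {x x' : X} {α : ℝ}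
    (hx' : Pos p (f x')) (hz : Pos p z) (hxz : leqPi p MIN (f x) z)
    (hratio : ratio p MIN (f x') z ≤ α) : Approximates p MIN α f x x' := by
  refine ⟨fun i hi => ?_, fun i hi => ?_⟩
  · have hdiv : z i / f x' i ≤ α := (div_le_ratio_of_mem _ _ hi).trans hratio
    exact (hxz.1 i hi).trans ((div_le_iff₀ (hx' i)).mp hdiv)
  · have hdiv : f x' i / z i ≤ α := (div_le_ratio_of_notMem _ _ hi).trans hratio
    have hα : 0 < α := (div_pos (hx' i) (hz i)).trans_le hdiv
    calc
      1 / α * f x' i = f x' i / α := one_div_mul_eq_div _ _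
      _ ≤ z i := (div_le_comm₀ (hz i) hα).mp hdiv
      _ ≤ f x i := hxz.2 i hi

end MOApprox

open MOApprox in
theorem statement9_general {p : ℕ} {MIN : Set (Fin p)} {X : Type*} {f : X → Fin p → ℝ} {x x' : X}
    (hx : Pos p (f x)) (hx' : Pos p (f x')) {s : (Fin p → ℝ) → ℝ} (hs : Scalarizing p MIN s)
    (hle : s (f x) ≤ s (f x')) {α : ℝ}
    (hα : α ∈ upperBounds (ratio p MIN (f x') '' LevelSet p s (f x'))) :
    Approximates p MIN α f x x' := by
  obtain ⟨z, hz, hxz⟩ := hs.exists_mem_levelSet_leqPi hx hx' hle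
  exact approximates_of_leqPi_of_ratio_le hx' hz.1 hxz (hα (Set.mem_image_of_mem _ hz))

open MOApprox in
/-- If the ratio set
`R = {max(max_{i∈MIN} y_i/y'_i, max_{i∈MAX} y'_i/y_i) : y ∈ L(y', s)}` is
bounded above and `α := sup R`, then every solution optimal for `s`
`α`-approximates `x'`. -/
theorem statement9 (p : ℕ) (hp : 1 ≤ p) (MIN : Set (Fin p))
    {X : Type*} (hX : Nonempty X) (f : X → Fin p → ℝ)
    (hpos : ∀ x, Pos p (f x)) (hcomp : IsCompact (Set.range f))
    (x' : X) (s : (Fin p → ℝ) → ℝ) (hs : Scalarizing p MIN s)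
    (hbdd : BddAbove (ratio p MIN (f x') '' LevelSet p s (f x'))) :
    ∀ x : X, OptimalFor p s f x →
      Approximates p MIN (sSup (ratio p MIN (f x') '' LevelSet p s (f x'))) f x x' := by
  intro x hopt
  exact statement9_general (hpos x) (hpos x') hs (hopt x') fun _ hr => le_csSup hbdd hr
end

section
/- Let Π = (MIN, MAX) be an objective decomposition, let s be a scalarizing function for Π, and let S = {s_w : w ∈ ℝ^p_>} be the weighted scalarization induced by W = ℝ^p_> and s, where s_w(y) := s(w_1·y_1, …, w_p·y_p). For ȳ ∈ ℝ^p_> let R(ȳ) := {max(max_{i ∈ MIN} y*_i/ȳ_i, max_{i ∈ MAX} ȳ_i/y*_i) : y* ∈ L(ȳ, s)}, and suppose R(ȳ₀) is bounded above for some ȳ₀ ∈ ℝ^p_>. Define β := inf_{ȳ ∈ ℝ^p_>} sup R(ȳ) (suprema in the extended reals; β is a finite real by assumption). Then for every ε > 0, in every instance of every p-objective optimization problem of type Π, every optimal solution set for S is a (β + ε)-approximation set. If moreover the infimum defining β is attained at some ȳ ∈ ℝ^p_>, then in every such instance every optimal solution set for S is a β-approximation set. -/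
open scoped Classical

/-!
For a solution `x'`, choose the weight `w = ȳ / f x'`, so that the weighted image of `x'` is `ȳ`,
and let `x` be optimal for `s_w`, with weighted image `y = w * f x`. Then `s y ≤ s ȳ`. Worsening
all objectives of `y` by a common factor `t ≥ 1` eventually yields a point that is `Π`-worse than
`ȳ`, so by the intermediate value theorem some worsening of `y` lies on the level set of `ȳ`. That
point is within the ratio `sup R(ȳ)` of `ȳ`, hence so is the better point `y`, and this comparison
of `y = w * f x` with `ȳ = w * f x'` does not change when the weights are cancelled.
-/

namespace MOApprox

/-- The point `y` worsened by the factor `t` in every objective: `y i` is multiplied by `t` for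
`i ∈ MIN` and divided by `t` for `i ∉ MIN`. Thus `x` `α`-approximates `x'` iff
`f x ≦_Π worsen MIN α (f x')`. -/
noncomputable def worsen {p : ℕ} (MIN : Set (Fin p)) (t : ℝ) (y : Fin p → ℝ) : Fin p → ℝ :=
  fun i => if i ∈ MIN then t * y i else y i / t

/-- The weighted scalarization `{s_w : w ∈ ℝ^p_>}` induced by `s`. -/
def weightedScalarization (p : ℕ) (s : (Fin p → ℝ) → ℝ) : Set ((Fin p → ℝ) → ℝ) :=
  (fun (w : Fin p → ℝ) => fun (y : Fin p → ℝ) => s (fun i => w i * y i)) ''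
    {w : Fin p → ℝ | Pos p w}

/-- The approximation quality `β = inf_{ȳ ∈ ℝ^p_>} sup R(ȳ)`, as an extended real. -/
noncomputable def bestRatio (p : ℕ) (MIN : Set (Fin p)) (s : (Fin p → ℝ) → ℝ) : EReal :=
  ⨅ ybar ∈ {y : Fin p → ℝ | Pos p y}, supRatio p MIN s ybar

section Worsen

variable {p : ℕ} {MIN : Set (Fin p)} {t α : ℝ} {w y y' y'' : Fin p → ℝ} {i : Fin p}

theorem worsen_apply_of_mem (hi : i ∈ MIN) : worsen MIN t y i = t * y i :=
  if_pos hi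

theorem worsen_apply_of_notMem (hi : i ∉ MIN) : worsen MIN t y i = y i / t :=
  if_neg hi

theorem worsen_one : worsen MIN 1 y = y := by
  ext i
  simp [worsen]

theorem Pos.worsen (hy : Pos p y) (ht : 0 < t) : Pos p (worsen MIN t y) := by
  intro i
  by_cases hi : i ∈ MIN
  · rw [worsen_apply_of_mem hi]
    exact mul_pos ht (hy i)
  · rw [worsen_apply_of_notMem hi]
    exact div_pos (hy i) ht

theorem worsen_mul : worsen MIN t (w * y) = w * worsen MIN t y := by
  ext i
  by_cases hi : i ∈ MIN
  · simp only [Pi.mul_apply, worsen_apply_of_mem hi, mul_left_comm]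
  · simp only [Pi.mul_apply, worsen_apply_of_notMem hi, mul_div_assoc]

theorem continuousOn_worsen : ContinuousOn (fun t => worsen MIN t y) (Set.Ioi 0) := by
  refine continuousOn_pi.2 fun i => ?_
  by_cases hi : i ∈ MIN
  · simp only [worsen_apply_of_mem hi]
    fun_prop
  · simp only [worsen_apply_of_notMem hi]
    exact continuousOn_const.div continuousOn_id fun t ht => ne_of_gt ht

theorem leqPi.trans (h : leqPi p MIN y y') (h' : leqPi p MIN y' y'') : leqPi p MIN y y'' :=
  ⟨fun i hi => (h.1 i hi).trans (h'.1 i hi), fun i hi => (h'.2 i hi).trans (h.2 i hi)⟩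

theorem leqPi_mul_left_iff (hw : Pos p w) : leqPi p MIN (w * y) (w * y') ↔ leqPi p MIN y y' := by
  simp only [leqPi, Pi.mul_apply, mul_le_mul_iff_right₀ (hw _)]

theorem leqPi_worsen_self (hy : Pos p y) (ht : 1 ≤ t) : leqPi p MIN y (worsen MIN t y) := by
  constructor <;> intro i hi
  · rw [worsen_apply_of_mem hi]
    exact le_mul_of_one_le_left (hy i).le ht
  · rw [worsen_apply_of_notMem hi]
    exact div_le_self (hy i).le ht

theorem eventually_ltPi_worsen (hy : Pos p y) (hy' : Pos p y') :
    ∀ᶠ t in Filter.atTop, ltPi p MIN y' (worsen MIN t y) := by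
  refine Filter.Eventually.and ?_ ?_ <;>
    refine Filter.eventually_all.2 fun i => Filter.eventually_imp_distrib_left.2 fun hi => ?_
  · simp only [worsen_apply_of_mem hi]
    exact (Filter.tendsto_id.atTop_mul_const (hy i)).eventually_gt_atTop (y' i)
  · simp only [worsen_apply_of_notMem hi]
    exact (tendsto_const_nhds.div_atTop Filter.tendsto_id).eventually_lt_const (hy' i)

theorem ratio_nonneg (hy : Pos p y) (hy' : Pos p y') : 0 ≤ ratio p MIN y' y :=
  le_max_of_le_left (Real.iSup_nonneg fun i => (div_pos (hy i) (hy' i)).le)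

theorem leqPi_worsen_of_ratio_le (hy : Pos p y) (hy' : Pos p y') (h : ratio p MIN y' y ≤ α) :
    leqPi p MIN y (worsen MIN α y') := by
  obtain ⟨hmin, hmax⟩ := max_le_iff.1 h
  constructor <;> intro i hi
  · have hle : y i / y' i ≤ α :=
      (le_ciSup (Set.finite_range fun j : MIN => y j / y' j).bddAbove ⟨i, hi⟩).trans hmin
    rw [worsen_apply_of_mem hi]
    exact (div_le_iff₀ (hy' i)).1 hle
  · have hle : y' i / y i ≤ α :=
      (le_ciSup (Set.finite_range fun j : ↥MINᶜ => y' j / y j).bddAbove ⟨i, hi⟩).trans hmax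
    have hα : 0 < α := (div_pos (hy' i) (hy i)).trans_le hle
    rw [worsen_apply_of_notMem hi]
    exact (div_le_comm₀ (hy i) hα).1 hle

theorem approximates_iff_leqPi_worsen {X : Type*} {f : X → Fin p → ℝ} {x x' : X} :
    Approximates p MIN α f x x' ↔ leqPi p MIN (f x) (worsen MIN α (f x')) := by
  refine and_congr ?_ ?_ <;> refine forall₂_congr fun i hi => ?_
  · rw [worsen_apply_of_mem hi]
  · rw [worsen_apply_of_notMem hi, one_div_mul_eq_div]

end Worsen

section LevelSet

variable {p : ℕ} {MIN : Set (Fin p)} {s : (Fin p → ℝ) → ℝ} {α : ℝ} {y y' : Fin p → ℝ}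

theorem ratio_le_supRatio (hy : y ∈ LevelSet p s y') :
    (ratio p MIN y' y : EReal) ≤ supRatio p MIN s y' :=
  le_sSup (Set.mem_image_of_mem _ hy)

theorem supRatio_lt_top (h : BddAbove (ratio p MIN y' '' LevelSet p s y')) :
    supRatio p MIN s y' < ⊤ := by
  obtain ⟨b, hb⟩ := h
  have hle : supRatio p MIN s y' ≤ b :=
    sSup_le (Set.forall_mem_image.2 fun y hy =>
      EReal.coe_le_coe_iff.2 (hb (Set.mem_image_of_mem _ hy)))
  exact hle.trans_lt (EReal.coe_lt_top b)

theorem supRatio_nonneg (hy : Pos p y) : 0 ≤ supRatio p MIN s y :=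
  (EReal.coe_nonneg.2 (ratio_nonneg hy hy)).trans (ratio_le_supRatio ⟨hy, rfl⟩)

theorem bestRatio_le_supRatio (hy : Pos p y) : bestRatio p MIN s ≤ supRatio p MIN s y :=
  iInf₂_le y hy

theorem bestRatio_nonneg : 0 ≤ bestRatio p MIN s :=
  le_iInf₂ fun _ hy => supRatio_nonneg hy

theorem exists_supRatio_lt_of_bestRatio_lt (h : bestRatio p MIN s < α) :
    ∃ y, Pos p y ∧ supRatio p MIN s y < α := by
  simpa only [bestRatio, iInf_lt_iff, Set.mem_ofPred_eq, exists_prop] using h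

theorem coe_toReal_bestRatio (h : bestRatio p MIN s ≠ ⊤) :
    ((bestRatio p MIN s).toReal : EReal) = bestRatio p MIN s :=
  EReal.coe_toReal h (EReal.bot_lt_zero.trans_le bestRatio_nonneg).ne'

end LevelSet

theorem Scalarizing.le_of_ltPi {p : ℕ} {MIN : Set (Fin p)} {s : (Fin p → ℝ) → ℝ}
    (hs : Scalarizing p MIN s) (y y' : Fin p → ℝ) (hy : Pos p y) (hy' : Pos p y')
    (h : ltPi p MIN y y') : s y ≤ s y' :=
  (hs.2 y y' hy hy' h).le

section Approximation

variable {p : ℕ} {MIN : Set (Fin p)} {s : (Fin p → ℝ) → ℝ} {α : ℝ} {y y' : Fin p → ℝ}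
  (hcont : ContinuousOn s {y | Pos p y})
  (hmono : ∀ y y', Pos p y → Pos p y' → ltPi p MIN y y' → s y ≤ s y')

include hcont hmono

theorem exists_worsen_mem_levelSet (hy : Pos p y) (hy' : Pos p y') (h : s y ≤ s y') :
    ∃ t, 1 ≤ t ∧ worsen MIN t y ∈ LevelSet p s y' := by
  obtain ⟨T, hlt, hT⟩ :=
    ((eventually_ltPi_worsen (MIN := MIN) hy hy').and (Filter.eventually_ge_atTop 1)).exists
  have hpos : ∀ t, 1 ≤ t → Pos p (worsen MIN t y) := fun t ht => hy.worsen (one_pos.trans_le ht)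
  have hpath : ContinuousOn (fun t => s (worsen MIN t y)) (Set.Icc 1 T) :=
    hcont.comp (continuousOn_worsen.mono fun _ ht => one_pos.trans_le ht.1)
      fun t ht => hpos t ht.1
  have hstart : s (worsen MIN 1 y) ≤ s y' := by rwa [worsen_one]
  have hend : s y' ≤ s (worsen MIN T y) := hmono _ _ hy' (hpos T hT) hlt
  obtain ⟨t, ht, hst⟩ := intermediate_value_Icc hT hpath ⟨hstart, hend⟩
  exact ⟨t, ht.1, hpos t ht.1, hst⟩

theorem leqPi_worsen_of_supRatio_le (hy : Pos p y) (hy' : Pos p y') (h : s y ≤ s y')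
    (hα : supRatio p MIN s y' ≤ α) : leqPi p MIN y (worsen MIN α y') := by
  obtain ⟨t, ht, hlevel⟩ := exists_worsen_mem_levelSet hcont hmono hy hy' h
  have hratio : ratio p MIN y' (worsen MIN t y) ≤ α :=
    EReal.coe_le_coe_iff.1 ((ratio_le_supRatio hlevel).trans hα)
  exact (leqPi_worsen_self hy ht).trans (leqPi_worsen_of_ratio_le hlevel.1 hy' hratio)

variable {X : Type*} {f : X → Fin p → ℝ} {P : Set X} (hf : ∀ x, Pos p (f x))
  (hP : OptSolSet p (weightedScalarization p s) f P)

include hf hP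

theorem approxSet_of_supRatio_le (hy : Pos p y) (hα : supRatio p MIN s y ≤ α) :
    ApproxSet p MIN α f P := by
  intro x'
  set w : Fin p → ℝ := y / f x'
  have hw : Pos p w := fun i => div_pos (hy i) (hf x' i)
  have hwx' : w * f x' = y := funext fun i => div_mul_cancel₀ _ (hf x' i).ne'
  obtain ⟨x, hxP, hopt⟩ := hP _ ⟨w, hw, rfl⟩
  have hle : s (w * f x) ≤ s (w * f x') := hopt x'
  have hwx : Pos p (w * f x) := fun i => mul_pos (hw i) (hf x i)
  rw [← hwx'] at hy hα
  have hweighted : leqPi p MIN (w * f x) (w * worsen MIN α (f x')) :=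
    worsen_mul (w := w) ▸ leqPi_worsen_of_supRatio_le hcont hmono hwx hy hle hα
  exact ⟨x, hxP, approximates_iff_leqPi_worsen.2 ((leqPi_mul_left_iff hw).1 hweighted)⟩

theorem approxSet_of_bestRatio_lt (h : bestRatio p MIN s < α) : ApproxSet p MIN α f P := by
  obtain ⟨y, hy, hlt⟩ := exists_supRatio_lt_of_bestRatio_lt h
  exact approxSet_of_supRatio_le hcont hmono hf hP hy hlt.le

end Approximation

end MOApprox

open MOApprox in
theorem statement13_general {p : ℕ} {MIN : Set (Fin p)} {s : (Fin p → ℝ) → ℝ}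
    (hcont : ContinuousOn s {y | Pos p y})
    (hmono : ∀ y y', Pos p y → Pos p y' → ltPi p MIN y y' → s y ≤ s y')
    (hbdd : ∃ y₀, Pos p y₀ ∧ BddAbove (ratio p MIN y₀ '' LevelSet p s y₀))
    {X : Type*} {f : X → Fin p → ℝ} (hf : ∀ x, Pos p (f x)) {P : Set X}
    (hP : OptSolSet p (weightedScalarization p s) f P) :
    (∀ ε : ℝ, 0 < ε → ApproxSet p MIN ((bestRatio p MIN s).toReal + ε) f P) ∧
      ((∃ y, Pos p y ∧ supRatio p MIN s y = bestRatio p MIN s) →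
        ApproxSet p MIN (bestRatio p MIN s).toReal f P) := by
  obtain ⟨y₀, hy₀, hy₀_bdd⟩ := hbdd
  have hfinite : bestRatio p MIN s ≠ ⊤ :=
    ((bestRatio_le_supRatio hy₀).trans_lt (supRatio_lt_top hy₀_bdd)).ne
  have hcoe := coe_toReal_bestRatio hfinite
  constructor
  · intro ε hε
    refine approxSet_of_bestRatio_lt hcont hmono hf hP ?_
    calc bestRatio p MIN s = ((bestRatio p MIN s).toReal : EReal) := hcoe.symm
      _ < ((bestRatio p MIN s).toReal + ε : ℝ) := EReal.coe_lt_coe_iff.2 (lt_add_of_pos_right _ hε)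
  · rintro ⟨y, hy, hattained⟩
    exact approxSet_of_supRatio_le hcont hmono hf hP hy (hattained.trans hcoe.symm).le

open MOApprox in
/-- For the weighted scalarization `S = {s_w : w ∈ ℝ^p_>}` indu-
ced by `s`, with `β := inf_{ȳ ∈ ℝ^p_>} sup R(ȳ)` (suprema in the extended
reals, finite since some `R(ȳ₀)` is bounded above): for every `ε > 0`, in every
instance of every `p`-objective problem of type `Π`, every optimal solution set
for `S` is a `(β + ε)`-approximation set; and if the infimum defining `β` is
attained, every optimal solution set for `S` is a `β`-approximation set. -/
theorem statement13 (p : ℕ) (hp : 1 ≤ p) (MIN : Set (Fin p))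
    (s : (Fin p → ℝ) → ℝ) (hs : Scalarizing p MIN s)
    (hbdd : ∃ ybar0 : Fin p → ℝ, Pos p ybar0 ∧
      BddAbove (ratio p MIN ybar0 '' LevelSet p s ybar0)) :
    (∀ ε : ℝ, 0 < ε → ∀ (X : Type) (f : X → Fin p → ℝ), Nonempty X →
        (∀ x, Pos p (f x)) → IsCompact (Set.range f) →
        ∀ P : Set X,
          OptSolSet p
            ((fun (w : Fin p → ℝ) => fun (y : Fin p → ℝ) => s (fun i => w i * y i)) ''
              {w : Fin p → ℝ | Pos p w}) f P →
          ApproxSet p MIN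
            ((⨅ ybar ∈ {y : Fin p → ℝ | Pos p y}, supRatio p MIN s ybar).toReal + ε)
            f P) ∧
    ((∃ ybar ∈ {y : Fin p → ℝ | Pos p y},
        supRatio p MIN s ybar
          = (⨅ y'' ∈ {y : Fin p → ℝ | Pos p y}, supRatio p MIN s y'')) →
      ∀ (X : Type) (f : X → Fin p → ℝ), Nonempty X →
        (∀ x, Pos p (f x)) → IsCompact (Set.range f) →
        ∀ P : Set X,
          OptSolSet p
            ((fun (w : Fin p → ℝ) => fun (y : Fin p → ℝ) => s (fun i => w i * y i)) ''
              {w : Fin p → ℝ | Pos p w}) f P →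
          ApproxSet p MIN
            ((⨅ ybar ∈ {y : Fin p → ℝ | Pos p y}, supRatio p MIN s ybar).toReal)
            f P) := by
  exact ⟨fun ε hε X f _ hf _ P hP => (statement13_general hs.1 hs.le_of_ltPi hbdd hf hP).1 ε hε,
    fun h X f _ hf _ P hP => (statement13_general hs.1 hs.le_of_ltPi hbdd hf hP).2 h⟩
end

section
/- Let s : ℝ^p → ℝ be a norm that is strictly monotone on the positive orthant, and let ȳ ∈ ℝ^p_>. Then sup{ max_{i=1,…,p} y*_i/ȳ_i : y* ∈ L(ȳ, s) } = max_{i=1,…,p} s(ȳ)/(s(e^i)·ȳ_i), where the supremum is taken in ℝ (the set on the left is nonempty, since ȳ ∈ L(ȳ, s), and bounded above). -/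
open scoped Classical

/-!
Approach the standard vector `eⁱ` from inside the positive orthant along `eⁱ + d • y`. If
`y i = 1`, then `eⁱ ≤ y`, so `eⁱ + d • y` lies strictly below `(1 + 2 * d) • y`; monotonicity,
homogeneity and the limit `d → 0` give `s eⁱ ≤ s y`. Rescaling, `y i * s eⁱ ≤ s y` for every positive
`y`, which bounds all the ratios on the level set. Conversely, rescaling points `z → eⁱ` into the
level set produces the ratios `s ȳ / s z * z i / ȳ i`, which tend to `s ȳ / (s eⁱ * ȳ i)`
by continuity at `eⁱ`. A norm is continuous because it is convex and finite-valued on `ℝ^p`.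
-/

open Set Filter Topology

namespace MOApprox

section PosOrthant

variable {ι : Type*}

/-- The open positive orthant of `ι → ℝ`, the analogue of `Pos` for an arbitrary index type. -/
def posOrthant (ι : Type*) : Set (ι → ℝ) := {y | StrongLT 0 y}

variable {s : (ι → ℝ) → ℝ} {x y z : ι → ℝ}

theorem smul_mem_posOrthant {c : ℝ} (hc : 0 < c) (hy : y ∈ posOrthant ι) :
    c • y ∈ posOrthant ι :=
  fun i => mul_pos hc (hy i)

theorem tendsto_add_smul_nhdsWithin_posOrthant (hx : 0 ≤ x) (hy : y ∈ posOrthant ι) :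
    Tendsto (fun d : ℝ => x + d • y) (𝓝[>] 0) (𝓝[posOrthant ι] x) := by
  refine tendsto_nhdsWithin_iff.2 ⟨?_, ?_⟩
  · have hcont : Continuous fun d : ℝ => x + d • y := by fun_prop
    simpa using hcont.continuousWithinAt (s := Ioi 0) (x := 0) |>.tendsto
  · filter_upwards [self_mem_nhdsWithin] with d hd i
    exact add_pos_of_nonneg_of_pos (hx i) (smul_mem_posOrthant hd hy i)

theorem nhdsWithin_posOrthant_neBot (hx : 0 ≤ x) : (𝓝[posOrthant ι] x).NeBot :=
  (tendsto_add_smul_nhdsWithin_posOrthant hx (y := 1) fun _ => one_pos).neBot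

theorem apply_le_apply_of_le
    (hsmul : ∀ c : ℝ, 0 < c → ∀ y ∈ posOrthant ι, s (c • y) = c * s y)
    (hmono : ∀ y ∈ posOrthant ι, ∀ z ∈ posOrthant ι, StrongLT y z → s y ≤ s z)
    (hcont : ContinuousWithinAt s (posOrthant ι) x)
    (hx : 0 ≤ x) (hy : y ∈ posOrthant ι) (hxy : x ≤ y) : s x ≤ s y := by
  have hleft : Tendsto (fun d : ℝ => s (x + d • y)) (𝓝[>] 0) (𝓝 (s x)) :=
    hcont.tendsto.comp (tendsto_add_smul_nhdsWithin_posOrthant hx hy)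
  have hright : Tendsto (fun d : ℝ => (1 + 2 * d) * s y) (𝓝[>] 0) (𝓝 (s y)) := by
    have hlin : Continuous fun d : ℝ => (1 + 2 * d) * s y := by fun_prop
    simpa using hlin.continuousWithinAt (s := Ioi 0) (x := 0) |>.tendsto
  refine le_of_tendsto_of_tendsto hleft hright ?_
  filter_upwards [self_mem_nhdsWithin] with d (hd : 0 < d)
  have hd' : 0 < 1 + 2 * d := by positivity
  rw [← hsmul _ hd' y hy]
  refine hmono _ (fun i => add_pos_of_nonneg_of_pos (hx i) (smul_mem_posOrthant hd hy i)) _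
    (smul_mem_posOrthant hd' hy) fun i => ?_
  have hdy : 0 < d * y i := mul_pos hd (hy i)
  change x i + d * y i < (1 + 2 * d) * y i
  linarith [hxy i]

theorem mul_apply_single_le [DecidableEq ι] {i : ι}
    (hsmul : ∀ c : ℝ, 0 < c → ∀ y ∈ posOrthant ι, s (c • y) = c * s y)
    (hmono : ∀ y ∈ posOrthant ι, ∀ z ∈ posOrthant ι, StrongLT y z → s y ≤ s z)
    (hcont : ContinuousWithinAt s (posOrthant ι) (Pi.single i 1))
    (hy : y ∈ posOrthant ι) : y i * s (Pi.single i 1) ≤ s y := by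
  have hinv : 0 < (y i)⁻¹ := inv_pos.2 (hy i)
  have hle : (Pi.single i 1 : ι → ℝ) ≤ (y i)⁻¹ • y :=
    update_le_iff.2 ⟨(inv_mul_cancel₀ (hy i).ne').ge,
      fun j _ => (smul_mem_posOrthant hinv hy j).le⟩
  have hsle := apply_le_apply_of_le hsmul hmono hcont (Pi.single_nonneg.2 zero_le_one)
    (smul_mem_posOrthant hinv hy) hle
  rwa [hsmul _ hinv y hy, le_inv_mul_iff₀ (hy i)] at hsle

theorem apply_div_smul_eq
    (hsmul : ∀ c : ℝ, 0 < c → ∀ y ∈ posOrthant ι, s (c • y) = c * s y)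
    (hz : z ∈ posOrthant ι) (hsz : 0 < s z) {t : ℝ} (ht : 0 < t) : s ((t / s z) • z) = t := by
  rw [hsmul _ (div_pos ht hsz) z hz, div_mul_cancel₀ _ hsz.ne']

end PosOrthant

section IsNorm

variable {p : ℕ} {s : (Fin p → ℝ) → ℝ}

theorem IsNorm.apply_pos (hs : IsNorm p s) {y : Fin p → ℝ} (hy : y ≠ 0) : 0 < s y :=
  (hs.1 y).lt_of_ne' (mt (hs.2.1 y).1 hy)

theorem IsNorm.apply_smul_of_pos (hs : IsNorm p s) {c : ℝ} (hc : 0 < c) (y : Fin p → ℝ) :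
    s (c • y) = c * s y := by
  rw [hs.2.2.1, abs_of_pos hc]

theorem IsNorm.continuous (hs : IsNorm p s) : Continuous s :=
  (Seminorm.of s hs.2.2.2 hs.2.2.1).convexOn.locallyLipschitz.continuous

end IsNorm

end MOApprox

open MOApprox in
theorem statement19_general {ι : Type*} [Finite ι] [Nonempty ι] [DecidableEq ι]
    {s : (ι → ℝ) → ℝ}
    (hsmul : ∀ c : ℝ, 0 < c → ∀ y ∈ posOrthant ι, s (c • y) = c * s y)
    (hmono : ∀ y ∈ posOrthant ι, ∀ z ∈ posOrthant ι, StrongLT y z → s y ≤ s z)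
    (hsingle : ∀ i, 0 < s (Pi.single i 1))
    (hcont : ∀ i, ContinuousWithinAt s (posOrthant ι) (Pi.single i 1))
    {ybar : ι → ℝ} (hybar : ybar ∈ posOrthant ι) :
    IsLUB ((fun y => ⨆ i, y i / ybar i) '' {y | y ∈ posOrthant ι ∧ s y = s ybar})
      (⨆ i, s ybar / (s (Pi.single i 1) * ybar i)) := by
  have hmul_le : ∀ y ∈ posOrthant ι, ∀ i, y i * s (Pi.single i 1) ≤ s y := fun y hy i =>
    mul_apply_single_le hsmul hmono (hcont i) hy
  have hspos : ∀ y ∈ posOrthant ι, 0 < s y := fun y hy =>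
    let i := Classical.arbitrary ι
    (mul_pos (hy i) (hsingle i)).trans_le (hmul_le y hy i)
  refine ⟨?_, fun b hb => ciSup_le fun i => ?_⟩
  · rintro _ ⟨y, ⟨hy, hsy⟩, rfl⟩
    refine ciSup_mono (finite_range _).bddAbove fun i => ?_
    rw [← div_div]
    gcongr
    · exact (hybar i).le
    · exact (le_div_iff₀ (hsingle i)).2 (hsy ▸ hmul_le y hy i)
  · have : (𝓝[posOrthant ι] (Pi.single i (1 : ℝ))).NeBot :=
      nhdsWithin_posOrthant_neBot (Pi.single_nonneg.2 zero_le_one)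
    have hlim : ContinuousWithinAt (fun z => s ybar / s z * z i / ybar i) (posOrthant ι)
        (Pi.single i 1) :=
      ((continuousWithinAt_const.div (hcont i) (hsingle i).ne').mul
        (continuous_apply i).continuousWithinAt).div_const _
    have hvalue : s ybar / s (Pi.single i 1) * (Pi.single i 1 : ι → ℝ) i / ybar i =
        s ybar / (s (Pi.single i 1) * ybar i) := by
      rw [Pi.single_eq_same, mul_one, div_div]
    refine le_of_tendsto (hvalue ▸ hlim.tendsto) ?_
    filter_upwards [self_mem_nhdsWithin] with z hz
    have hrescaled : s ((s ybar / s z) • z) = s ybar :=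
      apply_div_smul_eq hsmul hz (hspos z hz) (hspos ybar hybar)
    have hmem := smul_mem_posOrthant (div_pos (hspos ybar hybar) (hspos z hz)) hz
    exact (le_ciSup (f := fun j => ((s ybar / s z) • z) j / ybar j)
      (finite_range _).bddAbove i).trans (hb ⟨_, ⟨hmem, hrescaled⟩, rfl⟩)

open MOApprox in
/-- For a strictly monotone norm `s` and `ȳ ∈ ℝ^p_>`,
`sup{max_i y*_i/ȳ_i : y* ∈ L(ȳ, s)} = max_i s(ȳ)/(s(e^i)·ȳ_i)`. -/
theorem statement19 (p : ℕ) (hp : 1 ≤ p) (s : (Fin p → ℝ) → ℝ)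
    (hnorm : IsNorm p s) (hmono : StrictMonoOnPos p s)
    (ybar : Fin p → ℝ) (hybar : Pos p ybar) :
    sSup ((fun y => ⨆ i : Fin p, y i / ybar i) '' LevelSet p s ybar)
      = ⨆ i : Fin p, s ybar / (s (Pi.single i 1) * ybar i) := by
  have : Nonempty (Fin p) := ⟨⟨0, hp⟩⟩
  exact (statement19_general (fun c hc y _ => hnorm.apply_smul_of_pos hc y)
    (fun y hy z hz hyz => (hmono y z hy hz hyz).le)
    (fun i => hnorm.apply_pos (Pi.single_ne_zero_iff.2 one_ne_zero))
    (fun i => hnorm.continuous.continuousWithinAt) hybar).csSup_eq ⟨_, ybar, ⟨hybar, rfl⟩, rfl⟩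
end
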